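/- arXiv:2304.01840 — 2 statements merged into one kernel-verified Lean document; each statement's English description precedes it below -/
import Mathlib

section
/- Fix S ⊆ N. For every i ∈ S, w_i^S = Σ_{j∈S} A^S_{ij}, and for every i ∉ S, w_i^S = 1 − Σ_{j∈S} A^S_{ij}. (The marginal workloads are the reduced costs of the work LP, equation (12) of the paper.) -/
open Matrix BigOperators
open scoped Classical

noncomputable section

/-- Transition matrix of the `S`-active policy: row `i` of `P` if `i ∈ S`,
the `i`-th standard unit row otherwise. -/
def PAct {N : Type*} [DecidableEq N] (P : Matrix N N ℝ) (S : Finset N) : Matrix N N ℝ :=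
  fun i j => if i ∈ S then P i j else if i = j then 1 else 0

/-- Transition matrix of the `Sᶜ`-active policy. -/
def PPas {N : Type*} [DecidableEq N] (P : Matrix N N ℝ) (S : Finset N) : Matrix N N ℝ :=
  fun i j => if i ∈ S then (if i = j then 1 else 0) else P i j

/-- Basis matrix `B^S = I - β P^S`. -/
def BMat {N : Type*} [Fintype N] [DecidableEq N] (β : ℝ) (P : Matrix N N ℝ) (S : Finset N) :
    Matrix N N ℝ := 1 - β • PAct P S

/-- Non-basic matrix `N^S = I - β P^{Sᶜ}`. -/
def NMat {N : Type*} [Fintype N] [DecidableEq N] (β : ℝ) (P : Matrix N N ℝ) (S : Finset N) :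
    Matrix N N ℝ := 1 - β • PPas P S

/-- Basis inverse `H^S = (B^S)⁻¹`. -/
def HMat {N : Type*} [Fintype N] [DecidableEq N] (β : ℝ) (P : Matrix N N ℝ) (S : Finset N) :
    Matrix N N ℝ := (BMat β P S)⁻¹

/-- Tableau matrix `A^S = N^S · H^S`. -/
def AMat {N : Type*} [Fintype N] [DecidableEq N] (β : ℝ) (P : Matrix N N ℝ) (S : Finset N) :
    Matrix N N ℝ := NMat β P S * HMat β P S

/-- Work measure `g^S = H^S · 1_S`. -/
def gWork {N : Type*} [Fintype N] [DecidableEq N] (β : ℝ) (P : Matrix N N ℝ) (S : Finset N) :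
    N → ℝ := (HMat β P S).mulVec (fun j => if j ∈ S then 1 else 0)

/-- Reward measure `f^S = H^S · (R·1_S)`. -/
def fRew {N : Type*} [Fintype N] [DecidableEq N] (β : ℝ) (P : Matrix N N ℝ) (R : N → ℝ)
    (S : Finset N) : N → ℝ := (HMat β P S).mulVec (fun j => if j ∈ S then R j else 0)

/-- Marginal work `w_i^S`. -/
def wMarg {N : Type*} [Fintype N] [DecidableEq N] (β : ℝ) (P : Matrix N N ℝ) (S : Finset N)
    (i : N) : ℝ :=
  if i ∈ S then (1 - β) * gWork β P S i
  else 1 + β * ∑ j ∈ S, P i j * gWork β P S j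

/-- Marginal reward `r_i^S`. -/
def rMarg {N : Type*} [Fintype N] [DecidableEq N] (β : ℝ) (P : Matrix N N ℝ) (R : N → ℝ)
    (S : Finset N) (i : N) : ℝ :=
  if i ∈ S then (1 - β) * fRew β P R S i
  else R i + β * ∑ j ∈ S, P i j * fRew β P R S j

/-- Marginal productivity rate `ν_i^S = r_i^S / w_i^S`. -/
def nuMarg {N : Type*} [Fintype N] [DecidableEq N] (β : ℝ) (P : Matrix N N ℝ) (R : N → ℝ)
    (S : Finset N) (i : N) : ℝ := rMarg β P R S i / wMarg β P S i

/-- Feasibility of a pair of row vectors `(x⁰, x¹)` for initial state `i`: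
`x⁰, x¹ ≥ 0` and `(1-β) x⁰ + x¹ (I - β P) = e_i`. -/
def Feasible {N : Type*} [Fintype N] [DecidableEq N] (β : ℝ) (P : Matrix N N ℝ) (i : N)
    (x0 x1 : N → ℝ) : Prop :=
  (∀ j, 0 ≤ x0 j) ∧ (∀ j, 0 ≤ x1 j) ∧
    (1 - β) • x0 + Matrix.vecMul x1 (1 - β • P) = Pi.single i 1

/-- Modified reward vector `R̂ = R - (I - βP)·Q`. -/
def Rhat {N : Type*} [Fintype N] [DecidableEq N] (β : ℝ) (P : Matrix N N ℝ) (R Q : N → ℝ) :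
    N → ℝ := fun i => R i - ((1 - β • P).mulVec Q) i

theorem PAct_nonneg' {N : Type*} [DecidableEq N] (P : Matrix N N ℝ) (hP0 : ∀ i j, 0 ≤ P i j)
    (S : Finset N) (i j : N) : 0 ≤ PAct P S i j := by
  unfold PAct
  split_ifs <;> first | exact hP0 i j | norm_num

theorem PAct_sum' {N : Type*} [Fintype N] [DecidableEq N] (P : Matrix N N ℝ)
    (hP1 : ∀ i, ∑ j, P i j = 1) (S : Finset N) (i : N) : ∑ j, PAct P S i j = 1 := by
  unfold PAct
  by_cases h : i ∈ S
  · simp [h, hP1]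
  · simp [h]

theorem BMat_det_ne_zero {N : Type*} [Fintype N] [DecidableEq N]
    (P : Matrix N N ℝ) (hP0 : ∀ i j, 0 ≤ P i j) (hP1 : ∀ i, ∑ j, P i j = 1)
    (β : ℝ) (hβ0 : 0 < β) (hβ1 : β < 1) (S : Finset N) : (BMat β P S).det ≠ 0 := by
  apply det_ne_zero_of_sum_row_lt_diag
  intro k
  have h1 := PAct_sum' P hP1 S k
  rw [← Finset.add_sum_erase _ _ (Finset.mem_univ k)] at h1
  have h2 : ∑ j ∈ Finset.univ.erase k, ‖BMat β P S k j‖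
      = β * ∑ j ∈ Finset.univ.erase k, PAct P S k j := by
    rw [Finset.mul_sum]
    refine Finset.sum_congr rfl fun j hj => ?_
    have hne : k ≠ j := (Finset.ne_of_mem_erase hj).symm
    have := PAct_nonneg' P hP0 S k j
    simp [BMat, Matrix.one_apply_ne hne, abs_of_nonneg this, abs_of_pos hβ0]
  have h3 : BMat β P S k k = 1 - β * PAct P S k k := by simp [BMat]
  rw [h2, h3, Real.norm_eq_abs]
  refine lt_of_lt_of_le ?_ (le_abs_self _)
  have : ∑ j ∈ Finset.univ.erase k, PAct P S k j = 1 - PAct P S k k := by linarith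
  rw [this]
  linarith

theorem gWork_eq_zero {N : Type*} [Fintype N] [DecidableEq N]
    (P : Matrix N N ℝ) (hP0 : ∀ i j, 0 ≤ P i j) (hP1 : ∀ i, ∑ j, P i j = 1)
    (β : ℝ) (hβ0 : 0 < β) (hβ1 : β < 1) (S : Finset N) (i : N) (hi : i ∉ S) :
    gWork β P S i = 0 := by
  have hB : BMat β P S *ᵥ gWork β P S = fun j => if j ∈ S then 1 else 0 := by
    unfold gWork HMat
    rw [Matrix.mulVec_mulVec, Matrix.mul_nonsing_inv _
      (isUnit_iff_ne_zero.mpr (BMat_det_ne_zero P hP0 hP1 β hβ0 hβ1 S)), Matrix.one_mulVec]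
  have h := congrFun hB i
  have hr : (PAct P S *ᵥ gWork β P S) i = gWork β P S i := by
    simp [Matrix.mulVec, dotProduct, PAct, hi]
  rw [BMat, Matrix.sub_mulVec, Matrix.smul_mulVec, Matrix.one_mulVec] at h
  simp only [Pi.sub_apply, Pi.smul_apply, hr, hi, if_false, smul_eq_mul] at h
  have h' : (1 - β) * gWork β P S i = 0 := by linarith
  rcases mul_eq_zero.mp h' with h0 | h0
  · linarith
  · exact h0

theorem sum_AMat {N : Type*} [Fintype N] [DecidableEq N]
    (P : Matrix N N ℝ) (β : ℝ) (S : Finset N) (i : N) :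
    ∑ j ∈ S, AMat β P S i j
      = gWork β P S i - β * ∑ j, PPas P S i j * gWork β P S j := by
  have h : ∑ j ∈ S, AMat β P S i j = (NMat β P S *ᵥ gWork β P S) i := by
    unfold gWork
    rw [Matrix.mulVec_mulVec]
    simp [Matrix.mulVec, dotProduct, AMat]
  rw [h, NMat, Matrix.sub_mulVec, Matrix.smul_mulVec, Matrix.one_mulVec]
  simp [Matrix.mulVec, dotProduct]

/-- equation (12): the marginal workloads are the reduced costs of the
work LP. -/
theorem stmt7 {N : Type*} [Fintype N] [DecidableEq N] [Nonempty N]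
    (P : Matrix N N ℝ) (hP0 : ∀ i j, 0 ≤ P i j) (hP1 : ∀ i, ∑ j, P i j = 1)
    (β : ℝ) (hβ0 : 0 < β) (hβ1 : β < 1) (S : Finset N) :
    (∀ i ∈ S, wMarg β P S i = ∑ j ∈ S, AMat β P S i j) ∧
    (∀ i ∉ S, wMarg β P S i = 1 - ∑ j ∈ S, AMat β P S i j) := by
  constructor
  · intro i hi
    rw [sum_AMat]
    simp [wMarg, PPas, hi]
    ring
  · intro i hi
    rw [sum_AMat, gWork_eq_zero P hP0 hP1 β hβ0 hβ1 S i hi]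
    have hs : ∑ j, PPas P S i j * gWork β P S j = ∑ j ∈ S, P i j * gWork β P S j := by
      symm
      simp only [PPas, hi, if_false]
      refine Finset.sum_subset (Finset.subset_univ S) fun j _ hj => ?_
      rw [gWork_eq_zero P hP0 hP1 β hβ0 hβ1 S j hj, mul_zero]
    rw [hs]
    simp [wMarg, hi]
end
end

section
/- Fix S ⊆ N and j ∉ S, and let T := S ∪ {j}. Then for every i ∈ N, ν_i^T = ν_j^S − (w_i^S / w_i^T) · (ν_j^S − ν_i^S). (Proposition 5: one-step update formula for the marginal productivity rates.) -/
open Matrix BigOperators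
open scoped Classical

noncomputable section

theorem aux_PAct_mulVec {N : Type*} [Fintype N] [DecidableEq N]
    (P : Matrix N N ℝ) (β : ℝ) (S : Finset N) (x : N → ℝ) (i : N) :
    (BMat β P S).mulVec x i
      = if i ∈ S then x i - β * ∑ k, P i k * x k else (1 - β) * x i := by
  have h : (PAct P S).mulVec x i = if i ∈ S then ∑ k, P i k * x k else x i := by
    by_cases hi : i ∈ S <;> simp [Matrix.mulVec, dotProduct, PAct, hi]
  rw [BMat, Matrix.sub_mulVec, Matrix.one_mulVec, Matrix.smul_mulVec, Pi.sub_apply,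
    Pi.smul_apply, h, smul_eq_mul]
  split_ifs <;> ring

theorem aux_min {N : Type*} [Fintype N] [DecidableEq N] [Nonempty N]
    (P : Matrix N N ℝ) (hP0 : ∀ i j, 0 ≤ P i j) (hP1 : ∀ i, ∑ j, P i j = 1)
    (β : ℝ) (hβ0 : 0 < β) (hβ1 : β < 1) (S : Finset N) (x : N → ℝ)
    (hx : ∀ i, 0 ≤ (BMat β P S).mulVec x i) (i : N) : 0 ≤ x i := by
  obtain ⟨m, hm⟩ := Finite.exists_min x
  refine le_trans ?_ (hm i)
  have h := hx m
  rw [aux_PAct_mulVec] at h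
  have h2 : x m ≤ ∑ k, P m k * x k := by
    calc x m = ∑ k, P m k * x m := by rw [← Finset.sum_mul, hP1, one_mul]
      _ ≤ _ := Finset.sum_le_sum fun k _ => mul_le_mul_of_nonneg_left (hm k) (hP0 m k)
  have h3 := mul_le_mul_of_nonneg_left h2 hβ0.le
  have h4 : 0 ≤ (1 - β) * x m := by
    split_ifs at h
    · linarith
    · exact h
  exact nonneg_of_mul_nonneg_right h4 (by linarith)

theorem aux_unit {N : Type*} [Fintype N] [DecidableEq N] [Nonempty N]
    (P : Matrix N N ℝ) (hP0 : ∀ i j, 0 ≤ P i j) (hP1 : ∀ i, ∑ j, P i j = 1)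
    (β : ℝ) (hβ0 : 0 < β) (hβ1 : β < 1) (S : Finset N) : IsUnit (BMat β P S) := by
  rw [← Matrix.mulVec_injective_iff_isUnit]
  intro x y hxy
  have hxy' : (BMat β P S).mulVec x = (BMat β P S).mulVec y := hxy
  funext i
  have h1 := aux_min P hP0 hP1 β hβ0 hβ1 S (x - y)
    (by intro i; rw [Matrix.mulVec_sub, hxy']; simp) i
  have h2 := aux_min P hP0 hP1 β hβ0 hβ1 S (y - x)
    (by intro i; rw [Matrix.mulVec_sub, hxy']; simp) i
  simp only [Pi.sub_apply] at h1 h2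
  linarith

theorem aux_inv {N : Type*} [Fintype N] [DecidableEq N] [Nonempty N]
    (P : Matrix N N ℝ) (hP0 : ∀ i j, 0 ≤ P i j) (hP1 : ∀ i, ∑ j, P i j = 1)
    (β : ℝ) (hβ0 : 0 < β) (hβ1 : β < 1) (S : Finset N) (v : N → ℝ) :
    (BMat β P S).mulVec ((HMat β P S).mulVec v) = v := by
  have hu := (Matrix.isUnit_iff_isUnit_det _).1 (aux_unit P hP0 hP1 β hβ0 hβ1 S)
  rw [HMat, Matrix.mulVec_mulVec, Matrix.mul_nonsing_inv _ hu, Matrix.one_mulVec]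

theorem aux_f {N : Type*} [Fintype N] [DecidableEq N] [Nonempty N]
    (P : Matrix N N ℝ) (hP0 : ∀ i j, 0 ≤ P i j) (hP1 : ∀ i, ∑ j, P i j = 1)
    (β : ℝ) (hβ0 : 0 < β) (hβ1 : β < 1) (R : N → ℝ) (S : Finset N) (i : N) :
    (i ∈ S → fRew β P R S i = R i + β * ∑ k, P i k * fRew β P R S k) ∧
    (i ∉ S → fRew β P R S i = 0) := by
  have h := congrFun (aux_inv P hP0 hP1 β hβ0 hβ1 S (fun j => if j ∈ S then R j else 0)) i
  change (BMat β P S).mulVec (fRew β P R S) i = _ at h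
  rw [aux_PAct_mulVec] at h
  constructor
  · intro hi
    simp only [hi, if_true] at h
    linarith
  · intro hi
    simp only [hi, if_false] at h
    exact (mul_eq_zero.1 h).resolve_left (by linarith)

/-- Unified formula for the marginal reward. -/
theorem aux_r {N : Type*} [Fintype N] [DecidableEq N] [Nonempty N]
    (P : Matrix N N ℝ) (hP0 : ∀ i j, 0 ≤ P i j) (hP1 : ∀ i, ∑ j, P i j = 1)
    (β : ℝ) (hβ0 : 0 < β) (hβ1 : β < 1) (R : N → ℝ) (S : Finset N) (i : N) :
    rMarg β P R S i
      = R i + β * ∑ k, P i k * fRew β P R S k - β * fRew β P R S i := by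
  have h := aux_f P hP0 hP1 β hβ0 hβ1 R S
  unfold rMarg
  split_ifs with hi
  · have := (h i).1 hi
    linarith
  · rw [(h i).2 hi]
    have : ∑ k ∈ S, P i k * fRew β P R S k = ∑ k, P i k * fRew β P R S k := by
      apply Finset.sum_subset (Finset.subset_univ S)
      intro k _ hk
      rw [(h k).2 hk, mul_zero]
    rw [this]
    ring

theorem aux_w {N : Type*} [Fintype N] [DecidableEq N]
    (P : Matrix N N ℝ) (β : ℝ) (S : Finset N) (i : N) :
    wMarg β P S i = rMarg β P (fun _ => 1) S i := rfl

/-- One-step update of the marginal reward. -/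
theorem aux_step {N : Type*} [Fintype N] [DecidableEq N] [Nonempty N]
    (P : Matrix N N ℝ) (hP0 : ∀ i j, 0 ≤ P i j) (hP1 : ∀ i, ∑ j, P i j = 1)
    (β : ℝ) (hβ0 : 0 < β) (hβ1 : β < 1) (S : Finset N) (j : N) (hj : j ∉ S) (i : N) :
    ∃ h : ℝ, ∀ R : N → ℝ,
      rMarg β P R (insert j S) i = rMarg β P R S i + rMarg β P R S j * h := by
  set d : N → ℝ := (HMat β P (insert j S)).mulVec (Pi.single j 1) with hd
  refine ⟨β * ∑ k, P i k * d k - β * d i, fun R => ?_⟩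
  have key : fRew β P R (insert j S) = fRew β P R S + rMarg β P R S j • d := by
    apply Matrix.mulVec_injective_of_isUnit (aux_unit P hP0 hP1 β hβ0 hβ1 (insert j S))
    change (BMat β P (insert j S)).mulVec (fRew β P R (insert j S)) = (BMat β P (insert j S)).mulVec _
    rw [Matrix.mulVec_add, Matrix.mulVec_smul, hd, aux_inv P hP0 hP1 β hβ0 hβ1, fRew,
      aux_inv P hP0 hP1 β hβ0 hβ1]
    funext l
    rw [Pi.add_apply, aux_PAct_mulVec, aux_r P hP0 hP1 β hβ0 hβ1]
    have hl := aux_f P hP0 hP1 β hβ0 hβ1 R S l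
    by_cases hlj : l = j
    · subst hlj
      have := hl.2 hj
      simp [this]
    · by_cases hlS : l ∈ S
      · have := hl.1 hlS
        simp only [Finset.mem_insert, hlj, hlS, Pi.smul_apply, Pi.single_apply, or_true, if_true,
          if_false, smul_eq_mul]
        linarith
      · have := hl.2 hlS
        simp [hlj, hlS, this]
  simp only [aux_r P hP0 hP1 β hβ0 hβ1 R (insert j S) i, aux_r P hP0 hP1 β hβ0 hβ1 R S i, key,
    Pi.add_apply, Pi.smul_apply, smul_eq_mul]
  have : ∑ k, P i k * (fRew β P R S k + rMarg β P R S j * d k)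
      = ∑ k, P i k * fRew β P R S k + rMarg β P R S j * ∑ k, P i k * d k := by
    rw [Finset.mul_sum, ← Finset.sum_add_distrib]
    exact Finset.sum_congr rfl fun k _ => by ring
  rw [this]
  ring

theorem aux_pos {N : Type*} [Fintype N] [DecidableEq N] [Nonempty N]
    (P : Matrix N N ℝ) (hP0 : ∀ i j, 0 ≤ P i j) (hP1 : ∀ i, ∑ j, P i j = 1)
    (β : ℝ) (hβ0 : 0 < β) (hβ1 : β < 1) (S : Finset N) (i : N) : 0 < wMarg β P S i := by
  have hg : ∀ k, 0 ≤ fRew β P (fun _ => 1) S k := by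
    apply aux_min P hP0 hP1 β hβ0 hβ1 S
    intro k
    rw [fRew, aux_inv P hP0 hP1 β hβ0 hβ1]
    split_ifs <;> norm_num
  have hs : ∀ T : Finset N, 0 ≤ β * ∑ k ∈ T, P i k * fRew β P (fun _ => 1) S k := fun T =>
    mul_nonneg hβ0.le (Finset.sum_nonneg fun k _ => mul_nonneg (hP0 i k) (hg k))
  rw [aux_w, rMarg]
  split_ifs with hi
  · have h1 := (aux_f P hP0 hP1 β hβ0 hβ1 (fun _ => 1) S i).1 hi
    have h2 := hs Finset.univ
    exact mul_pos (by linarith) (by linarith)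
  · have := hs S
    linarith

/-- Proposition 5: one-step update formula for the marginal
productivity rates. -/
theorem stmt10 {N : Type*} [Fintype N] [DecidableEq N] [Nonempty N]
    (P : Matrix N N ℝ) (hP0 : ∀ i j, 0 ≤ P i j) (hP1 : ∀ i, ∑ j, P i j = 1)
    (β : ℝ) (hβ0 : 0 < β) (hβ1 : β < 1) (R : N → ℝ)
    (S : Finset N) (j : N) (hj : j ∉ S) (i : N) :
    nuMarg β P R (insert j S) i
      = nuMarg β P R S j
        - (wMarg β P S i / wMarg β P (insert j S) i)
          * (nuMarg β P R S j - nuMarg β P R S i) := by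
  obtain ⟨h, hh⟩ := aux_step P hP0 hP1 β hβ0 hβ1 S j hj i
  have hj0 := (aux_pos P hP0 hP1 β hβ0 hβ1 S j).ne'
  have hi0 := (aux_pos P hP0 hP1 β hβ0 hβ1 S i).ne'
  have hT0 := (aux_pos P hP0 hP1 β hβ0 hβ1 (insert j S) i).ne'
  have hw : wMarg β P (insert j S) i = wMarg β P S i + wMarg β P S j * h := hh (fun _ => 1)
  unfold nuMarg
  rw [hh R]
  generalize wMarg β P (insert j S) i = t at *
  generalize wMarg β P S i = a at *
  generalize wMarg β P S j = b at *
  generalize rMarg β P R S i = c at *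
  generalize rMarg β P R S j = e at *
  field_simp
  rw [hw]
  ring
end
end
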